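/- Let m > 3, let r > 2 be real, and place m candidates in ℝ^{m−1} by y_i = e_i for 1 ≤ i ≤ m−1 and y_m = (r, r, …, r); here d_min = √2, d_max = √((r−1)² + (m−2)r²), and σ = d_max/d_min. Then for n ≥ 3 voters, every strategy-proof randomized two-winner scv mechanism for these candidates has distortion at least σ/6 on this candidate configuration. -/

import Mathlib

open Finset

/-- Cost of a point `z` when the pair of candidates `(y k, y l)` is elected:
the distance to the closer of the two winners. -/
noncomputable def pairCost {α : Type*} [PseudoMetricSpace α] {m : ℕ}
    (y : Fin m → α) (k l : Fin m) (z : α) : ℝ :=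
  min (dist z (y k)) (dist z (y l))

/-- Social cost of the pair `(y k, y l)` on the location profile `x`. -/
noncomputable def socialCost {α : Type*} [PseudoMetricSpace α] {m n : ℕ}
    (y : Fin m → α) (k l : Fin m) (x : Fin n → α) : ℝ :=
  ∑ i, pairCost y k l (x i)

/-- Optimal social cost over all pairs of distinct candidates. -/
noncomputable def OPT {α : Type*} [PseudoMetricSpace α] {m n : ℕ}
    (y : Fin m → α) (x : Fin n → α) : ℝ :=
  sInf {c : ℝ | ∃ k l : Fin m, k ≠ l ∧ c = socialCost y k l x}

/-- A location profile `x` is consistent with an action profile `a` if every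
voter votes for (one of) her nearest candidate(s). -/
def Consistent {α : Type*} [PseudoMetricSpace α] {m n : ℕ}
    (y : Fin m → α) (a : Fin n → Fin m) (x : Fin n → α) : Prop :=
  ∀ (i : Fin n) (k : Fin m), dist (x i) (y (a i)) ≤ dist (x i) (y k)

/-- `f` is a randomized two-winner mechanism: on every action profile it gives a
probability distribution over unordered pairs of distinct candidates
(represented by a symmetric nonnegative function vanishing on the diagonal whose
values over the pairs `k < l` sum to one). -/
def IsRandMech {m n : ℕ} (f : (Fin n → Fin m) → Fin m → Fin m → ℝ) : Prop :=
  ∀ a : Fin n → Fin m, (∀ k l, 0 ≤ f a k l) ∧ (∀ k l, f a k l = f a l k) ∧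
    (∀ k, f a k k = 0) ∧
    ∑ p ∈ univ.filter (fun p : Fin m × Fin m => p.1 < p.2), f a p.1 p.2 = 1

/-- Expected cost of the point `z` under the lottery `f a`. -/
noncomputable def expCost {α : Type*} [PseudoMetricSpace α] {m n : ℕ}
    (y : Fin m → α) (f : (Fin n → Fin m) → Fin m → Fin m → ℝ)
    (a : Fin n → Fin m) (z : α) : ℝ :=
  ∑ p ∈ univ.filter (fun p : Fin m × Fin m => p.1 < p.2),
    f a p.1 p.2 * pairCost y p.1 p.2 z

/-- Expected social cost of the randomized mechanism `f` on action profile `a`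
and location profile `x`. -/
noncomputable def expSC {α : Type*} [PseudoMetricSpace α] {m n : ℕ}
    (y : Fin m → α) (f : (Fin n → Fin m) → Fin m → Fin m → ℝ)
    (a : Fin n → Fin m) (x : Fin n → α) : ℝ :=
  ∑ p ∈ univ.filter (fun p : Fin m × Fin m => p.1 < p.2),
    f a p.1 p.2 * socialCost y p.1 p.2 x

/-- Strategy-proofness of a randomized two-winner mechanism: voting for a
nearest candidate always minimizes a voter's expected cost, whatever the
other voters do. -/
def RandSP {α : Type*} [PseudoMetricSpace α] {m n : ℕ}
    (y : Fin m → α) (f : (Fin n → Fin m) → Fin m → Fin m → ℝ) : Prop :=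
  ∀ (i : Fin n) (xi : α) (a : Fin n → Fin m) (astar ai' : Fin m),
    (∀ k, dist xi (y astar) ≤ dist xi (y k)) →
    expCost y f (Function.update a i astar) xi ≤
      expCost y f (Function.update a i ai') xi

/-- The candidate configuration of Instance 3 of the paper: in `ℝ^(m-1)`,
candidate `i` (for `i < m - 1`) sits at the `i`-th standard basis vector, and the
last candidate sits at `(r, r, ..., r)`. -/
noncomputable def multiCand (m : ℕ) (r : ℝ) : Fin m → EuclideanSpace ℝ (Fin (m - 1)) :=
  fun k =>
    if h : (k : ℕ) < m - 1 then EuclideanSpace.single (⟨(k : ℕ), h⟩ : Fin (m - 1)) (1 : ℝ)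
    else (WithLp.equiv 2 (Fin (m - 1) → ℝ)).symm (fun _ => r)

/-!
Suppose the distortion is below `S`. If at most two candidates receive votes, moving one voter
slightly off her candidate makes the optimum arbitrarily small but positive, so every voted
candidate is elected with certainty. Now let three blocks of voters, two of them single voters,
vote for three distinct candidates. The candidates are affinely independent, so the Voronoi cells
of any two of them share a boundary point away from all other cells. A block located there does
not gain by switching between the two, and switching can produce a two-candidate profile; hence
every pair with positive probability consists of two of the three voted candidates, and some pair
`b, c` has probability at least `1 / 3`. If the remaining block switches to a remote candidate
`d`, then a block on the boundary of its old and new votes must be indifferent, so `b, c` keeps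
its probability while missing the remote block. One of `b`, `c` has a single voter, so electing
`d` and the other one costs only `dist b c`.
-/

open Filter Topology

/-- The distortion of `f` is less than `S` on every consistent pair of profiles with positive
optimum. Profiles with optimum `0`, for which the ratio is a junk value, are ignored. The
lower bound is proved by refuting this for small `S`. -/
def DistortionLT {α : Type*} [PseudoMetricSpace α] {m n : ℕ} (y : Fin m → α)
    (f : (Fin n → Fin m) → Fin m → Fin m → ℝ) (S : ℝ) : Prop :=
  ∀ a x, Consistent y a x → 0 < OPT y x → expSC y f a x < S * OPT y x

/-- When at most two candidates receive votes, `f` elects each of them with probability one: a pair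
elected with positive probability contains every vote. -/
def ElectsTwoVoted {m n : ℕ} (f : (Fin n → Fin m) → Fin m → Fin m → ℝ) : Prop :=
  ∀ (A : Fin n → Fin m) (a b : Fin m), a ≠ b → (∀ i, A i = a ∨ A i = b) →
    ∀ k l, f A k l ≠ 0 → ∀ i, A i = k ∨ A i = l

/-- The Voronoi cells of `y a` and `y b` share a boundary point `z` that lies in no other cell.
Strategy-proofness makes a voter at `z` indifferent between voting `a` and voting `b`. -/
def VoronoiNeighbors {α : Type*} [PseudoMetricSpace α] {m : ℕ} (y : Fin m → α)
    (a b : Fin m) : Prop :=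
  ∃ z, dist z (y a) = dist z (y b) ∧ ∀ c, c ≠ a → c ≠ b → dist z (y a) < dist z (y c)

section Cost

variable {α : Type*} [PseudoMetricSpace α] {m n : ℕ} {y : Fin m → α}

lemma dist_le_of_forall_lt {z : α} {a b : Fin m} (hz : dist z (y a) = dist z (y b))
    (hfar : ∀ c, c ≠ a → c ≠ b → dist z (y a) < dist z (y c)) (c : Fin m) :
    dist z (y a) ≤ dist z (y c) := by
  rcases eq_or_ne c a with rfl | hca
  · exact le_rfl
  rcases eq_or_ne c b with rfl | hcb
  · exact hz.le
  exact (hfar c hca hcb).le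

lemma pairCost_nonneg (k l : Fin m) (z : α) : 0 ≤ pairCost y k l z :=
  le_min dist_nonneg dist_nonneg

lemma pairCost_comm (k l : Fin m) (z : α) : pairCost y k l z = pairCost y l k z :=
  min_comm _ _

lemma pairCost_eq_of_mem {ρ : ℝ} {z : α} {j k l : Fin m} (hmin : ∀ c, ρ ≤ dist z (y c))
    (hj : dist z (y j) = ρ) (hjkl : j = k ∨ j = l) : pairCost y k l z = ρ := by
  rcases hjkl with rfl | rfl
  · exact (min_eq_left (hj.trans_le (hmin l))).trans hj
  · exact (min_eq_right (hj.trans_le (hmin k))).trans hj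

lemma socialCost_comm (k l : Fin m) (x : Fin n → α) : socialCost y k l x = socialCost y l k x :=
  Finset.sum_congr rfl fun i _ => pairCost_comm k l (x i)

lemma pairCost_le_socialCost (k l : Fin m) (x : Fin n → α) (i : Fin n) :
    pairCost y k l (x i) ≤ socialCost y k l x :=
  Finset.single_le_sum (f := fun i => pairCost y k l (x i))
    (fun i _ => pairCost_nonneg k l (x i)) (Finset.mem_univ i)

lemma socialCost_nonneg (k l : Fin m) (x : Fin n → α) : 0 ≤ socialCost y k l x :=
  Finset.sum_nonneg fun i _ => pairCost_nonneg k l (x i)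

lemma OPT_le_socialCost {k l : Fin m} (hkl : k ≠ l) (x : Fin n → α) :
    OPT y x ≤ socialCost y k l x := by
  refine csInf_le ⟨0, ?_⟩ ⟨k, l, hkl, rfl⟩
  rintro _ ⟨k, l, -, rfl⟩
  exact socialCost_nonneg k l x

lemma OPT_le_pairCost {a b : Fin m} (hab : a ≠ b) {x : Fin n → α} {i : Fin n}
    (hx : ∀ j ≠ i, x j = y a ∨ x j = y b) : OPT y x ≤ pairCost y a b (x i) := by
  refine (OPT_le_socialCost hab x).trans_eq (Finset.sum_eq_single i (fun j _ hj => ?_) (by simp))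
  rcases hx j hj with h | h <;> simp [pairCost, h]

lemma OPT_comp_le_dist {a b : Fin m} (hab : a ≠ b) {A : Fin n → Fin m} {i : Fin n}
    (hA : ∀ j ≠ i, A j = a ∨ A j = b) : OPT y (y ∘ A) ≤ dist (y (A i)) (y b) :=
  (OPT_le_pairCost hab fun j hj => (hA j hj).imp (congrArg y) (congrArg y)).trans (min_le_right _ _)

lemma OPT_pos {a b : Fin m} (hab : a ≠ b) {x : Fin n → α}
    (hx : ∀ k l, k ≠ l → ∃ i, 0 < pairCost y k l (x i)) : 0 < OPT y x := by
  have hfin : {c | ∃ k l : Fin m, k ≠ l ∧ c = socialCost y k l x}.Finite :=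
    (Set.finite_range fun p : Fin m × Fin m => socialCost y p.1 p.2 x).subset <| by
      rintro _ ⟨k, l, -, rfl⟩
      exact ⟨(k, l), rfl⟩
  refine (hfin.lt_csInf_iff ⟨_, a, b, hab, rfl⟩).2 ?_
  rintro _ ⟨k, l, hkl, rfl⟩
  obtain ⟨i, hi⟩ := hx k l hkl
  exact hi.trans_le (pairCost_le_socialCost k l x i)

lemma consistent_comp (A : Fin n → Fin m) : Consistent y A (y ∘ A) := fun i k => by
  simp

lemma Consistent.update {A : Fin n → Fin m} {x : Fin n → α} (hx : Consistent y A x) {i : Fin n}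
    {z : α} (hz : ∀ k, dist z (y (A i)) ≤ dist z (y k)) :
    Consistent y A (Function.update x i z) := by
  intro j k
  rcases eq_or_ne j i with rfl | hj
  · simpa using hz k
  · simpa [hj] using hx j k

end Cost

lemma pairCost_pos {α : Type*} [MetricSpace α] {m : ℕ} {y : Fin m → α} {k l : Fin m} {z : α}
    (hk : z ≠ y k) (hl : z ≠ y l) : 0 < pairCost y k l z :=
  lt_min (dist_pos.2 hk) (dist_pos.2 hl)

namespace IsRandMech

variable {α : Type*} [PseudoMetricSpace α] {m n : ℕ} {y : Fin m → α}
  {f : (Fin n → Fin m) → Fin m → Fin m → ℝ}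

lemma ne_of_apply_ne_zero (hf : IsRandMech f) {A : Fin n → Fin m} {k l : Fin m}
    (hkl : f A k l ≠ 0) : k ≠ l := by
  rintro rfl
  exact hkl ((hf A).2.2.1 k)

lemma comp {N : ℕ} (hf : IsRandMech f) (g : Fin n → Fin N) :
    IsRandMech fun v : Fin N → Fin m => f (v ∘ g) :=
  fun v => hf (v ∘ g)

lemma expSC_nonneg (hf : IsRandMech f) (A : Fin n → Fin m) (x : Fin n → α) :
    0 ≤ expSC y f A x :=
  Finset.sum_nonneg fun p _ => mul_nonneg ((hf A).1 p.1 p.2) (socialCost_nonneg p.1 p.2 x)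

lemma mul_socialCost_le_expSC (hf : IsRandMech f) (A : Fin n → Fin m) (x : Fin n → α)
    (k l : Fin m) : f A k l * socialCost y k l x ≤ expSC y f A x := by
  wlog hkl : k < l generalizing k l
  · rcases (not_lt.1 hkl).eq_or_lt with rfl | hlk
    · simpa [(hf A).2.2.1] using hf.expSC_nonneg A x
    · rw [(hf A).2.1, socialCost_comm]
      exact this l k hlk
  exact Finset.single_le_sum
    (f := fun p : Fin m × Fin m => f A p.1 p.2 * socialCost y p.1 p.2 x)
    (fun p _ => mul_nonneg ((hf A).1 p.1 p.2) (socialCost_nonneg p.1 p.2 x))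
    (Finset.mem_filter.2 ⟨Finset.mem_univ (k, l), hkl⟩)

lemma mul_pairCost_le_expSC (hf : IsRandMech f) (A : Fin n → Fin m) (x : Fin n → α)
    (k l : Fin m) (i : Fin n) : f A k l * pairCost y k l (x i) ≤ expSC y f A x :=
  (mul_le_mul_of_nonneg_left (pairCost_le_socialCost k l x i) ((hf A).1 k l)).trans
    (hf.mul_socialCost_le_expSC A x k l)

lemma exists_one_div_le_apply (hf : IsRandMech f) {A : Fin n → Fin m} {T : Finset (Fin m × Fin m)}
    (hT : ∀ k l, k < l → f A k l ≠ 0 → (k, l) ∈ T) {N : ℕ} (hN : #T ≤ N) :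
    ∃ k l, f A k l ≠ 0 ∧ 1 / (N : ℝ) ≤ f A k l := by
  let P := (univ.filter fun p : Fin m × Fin m => p.1 < p.2).filter fun p => f A p.1 p.2 ≠ 0
  have hsum : ∑ p ∈ P, f A p.1 p.2 = 1 := (Finset.sum_filter_ne_zero _).trans (hf A).2.2.2
  have hPT : P ⊆ T := fun p hp => by
    simp only [P, Finset.mem_filter, Finset.mem_univ, true_and] at hp
    exact hT p.1 p.2 hp.1 hp.2
  have hP : P.Nonempty := Finset.nonempty_of_sum_ne_zero (hsum.trans_ne one_ne_zero)
  have hle : ∑ _p ∈ P, 1 / (N : ℝ) ≤ ∑ p ∈ P, f A p.1 p.2 := by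
    rw [hsum, Finset.sum_const, nsmul_eq_mul, mul_one_div]
    exact div_le_one_of_le₀ (mod_cast (Finset.card_le_card hPT).trans hN) N.cast_nonneg
  obtain ⟨p, hp, hpN⟩ := Finset.exists_le_of_sum_le hP hle
  exact ⟨p.1, p.2, (Finset.mem_filter.1 hp).2, hpN⟩

lemma expCost_sub (hf : IsRandMech f) (A : Fin n → Fin m) (z : α) (ρ : ℝ) :
    expCost y f A z - ρ = ∑ p ∈ univ.filter (fun p : Fin m × Fin m => p.1 < p.2),
      f A p.1 p.2 * (pairCost y p.1 p.2 z - ρ) := by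
  simp only [mul_sub, Finset.sum_sub_distrib, ← Finset.sum_mul, (hf A).2.2.2, one_mul, expCost]

lemma pairCost_eq_of_expCost_le (hf : IsRandMech f) {A : Fin n → Fin m} {z : α} {ρ : ℝ}
    (hmin : ∀ c, ρ ≤ dist z (y c)) (hle : expCost y f A z ≤ ρ) {k l : Fin m}
    (hkl : f A k l ≠ 0) : pairCost y k l z = ρ := by
  wlog hlt : k < l generalizing k l
  · rw [pairCost_comm]
    exact this (by rwa [(hf A).2.1])
      ((not_lt.1 hlt).lt_of_ne (hf.ne_of_apply_ne_zero hkl).symm)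
  have hterm : ∀ p ∈ univ.filter (fun p : Fin m × Fin m => p.1 < p.2),
      0 ≤ f A p.1 p.2 * (pairCost y p.1 p.2 z - ρ) := fun p _ =>
    mul_nonneg ((hf A).1 p.1 p.2) (sub_nonneg.2 (le_min (hmin p.1) (hmin p.2)))
  have hsum := le_antisymm ((hf.expCost_sub A z ρ).symm.trans_le (sub_nonpos.2 hle))
    (Finset.sum_nonneg hterm)
  have hzero := (Finset.sum_eq_zero_iff_of_nonneg hterm).1 hsum (k, l) (by simpa using hlt)
  exact sub_eq_zero.1 ((mul_eq_zero.1 hzero).resolve_left hkl)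

lemma expCost_eq_add (hf : IsRandMech f) {A : Fin n → Fin m} {z : α} {ρ : ℝ} {a b : Fin m}
    (hab : a ≠ b)
    (h : ∀ k l, f A k l ≠ 0 → s(k, l) ≠ s(a, b) → pairCost y k l z = ρ) :
    expCost y f A z = ρ + f A a b * (pairCost y a b z - ρ) := by
  wlog hlt : a < b generalizing a b
  · rw [(hf A).2.1, pairCost_comm]
    exact this hab.symm (by rwa [Sym2.eq_swap]) ((not_lt.1 hlt).lt_of_ne hab.symm)
  rw [← sub_eq_iff_eq_add', hf.expCost_sub]
  refine Finset.sum_eq_single (a, b) (fun p hp hne => ?_) (by simp [hlt])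
  by_cases hp0 : f A p.1 p.2 = 0
  · rw [hp0, zero_mul]
  refine mul_eq_zero_of_right _ (sub_eq_zero.2 (h _ _ hp0 fun hs => ?_))
  have hp : p.1 < p.2 := (Finset.mem_filter.1 hp).2
  rcases Sym2.eq_iff.1 hs with ⟨h1, h2⟩ | ⟨h1, h2⟩
  · exact hne (Prod.ext h1 h2)
  · exact lt_asymm hlt (h1 ▸ h2 ▸ hp)

end IsRandMech

namespace RandSP

variable {α : Type*} [PseudoMetricSpace α] {m n : ℕ} {y : Fin m → α}
  {f : (Fin n → Fin m) → Fin m → Fin m → ℝ}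

lemma expCost_piecewise_le (hsp : RandSP y f) {z : α} {s : Fin m}
    (hs : ∀ k, dist z (y s) ≤ dist z (y k)) (t : Fin m) (T : Finset (Fin n))
    (A : Fin n → Fin m) :
    expCost y f (T.piecewise (fun _ => s) A) z ≤ expCost y f (T.piecewise (fun _ => t) A) z := by
  induction T using Finset.induction_on generalizing A with
  | empty => simp
  | insert j T hj ih =>
    rw [Finset.piecewise_insert, Finset.piecewise_insert]
    refine (hsp j z _ s t hs).trans ?_
    rw [Finset.update_piecewise_of_notMem _ _ _ hj, Finset.update_piecewise_of_notMem _ _ _ hj]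
    exact ih _

-- A block of voters with a common location gains nothing by a joint deviation, because its members
-- can deviate one after the other.
lemma comp {N : ℕ} (hsp : RandSP y f) (g : Fin n → Fin N) :
    RandSP y fun v : Fin N → Fin m => f (v ∘ g) := by
  intro i z v s t hs
  have hupdate (c : Fin m) : Function.update v i c ∘ g =
      (univ.filter (g · = i)).piecewise (fun _ => c) (v ∘ g) := by
    ext j
    by_cases hj : g j = i <;> simp [Finset.piecewise, hj]
  simpa only [expCost, hupdate] using
    hsp.expCost_piecewise_le hs t (univ.filter (g · = i)) (v ∘ g)

lemma expCost_update_eq (hsp : RandSP y f) {z : α} {s t : Fin m}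
    (hst : dist z (y s) = dist z (y t)) (hs : ∀ k, dist z (y s) ≤ dist z (y k))
    (A : Fin n → Fin m) (i : Fin n) :
    expCost y f (Function.update A i s) z = expCost y f (Function.update A i t) z :=
  le_antisymm (hsp i z A s t hs) (hsp i z A t s fun k => hst.symm.trans_le (hs k))

end RandSP

section TwoVotes

lemma DistortionLT.mul_pairCost_lt {α : Type*} [PseudoMetricSpace α] {m n : ℕ} {y : Fin m → α}
    {f : (Fin n → Fin m) → Fin m → Fin m → ℝ} {S : ℝ} (hS : DistortionLT y f S)
    (hf : IsRandMech f) {A : Fin n → Fin m} {x : Fin n → α} (hx : Consistent y A x)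
    (hpos : 0 < OPT y x) {c : ℝ} (hc : OPT y x ≤ c) (k l : Fin m) (i : Fin n) :
    f A k l * pairCost y k l (x i) < S * c := by
  have hlt := hS A x hx hpos
  have hS0 : 0 < S := pos_of_mul_pos_left ((hf.expSC_nonneg A x).trans_lt hlt) hpos.le
  exact (hf.mul_pairCost_le_expSC A x k l i).trans_lt
    (hlt.trans_le (mul_le_mul_of_nonneg_left hc hS0.le))

lemma eventually_forall_dist_le {α : Type*} [MetricSpace α] {m : ℕ} {y : Fin m → α}
    (hy : Function.Injective y) (a : Fin m) :
    ∀ᶠ z in 𝓝 (y a), ∀ k, dist z (y a) ≤ dist z (y k) := by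
  refine eventually_all.2 fun k => ?_
  rcases eq_or_ne k a with rfl | hk
  · simp
  have hlt : dist (y a) (y a) < dist (y a) (y k) := by
    simpa using hy.ne hk.symm
  have hcont (c : α) : Continuous (dist · c) := by fun_prop
  exact ((hcont _).continuousAt.eventually_lt (hcont _).continuousAt hlt).mono
    fun _ => le_of_lt

theorem DistortionLT.electsTwoVoted {α : Type*} [MetricSpace α] [PerfectSpace α] {m n : ℕ}
    {y : Fin m → α} {f : (Fin n → Fin m) → Fin m → Fin m → ℝ} {S : ℝ}
    (hS : DistortionLT y f S) (hy : Function.Injective y) (hf : IsRandMech f) :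
    ElectsTwoVoted f := by
  intro A a b hab hA k l hkl i
  by_contra! hi
  have hpos : S * dist (y (A i)) (y (A i)) < f A k l * pairCost y k l (y (A i)) := by
    rw [dist_self, mul_zero]
    exact mul_pos (((hf A).1 k l).lt_of_ne' hkl) (pairCost_pos (hy.ne hi.1) (hy.ne hi.2))
  have hcheap : ∀ᶠ z in 𝓝 (y (A i)), S * dist z (y (A i)) < f A k l * pairCost y k l z := by
    refine ContinuousAt.eventually_lt ?_ ?_ hpos
    · fun_prop
    · unfold pairCost
      fun_prop
  have hoff : ∀ᶠ z in 𝓝[≠] (y (A i)), z ≠ y (A i) := self_mem_nhdsWithin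
  obtain ⟨z, ⟨hnear, hcheap⟩, hzi⟩ :=
    (((eventually_forall_dist_le hy (A i)).and hcheap).filter_mono nhdsWithin_le_nhds |>.and
      hoff).exists
  set x := Function.update (y ∘ A) i z with hx
  have hxi : x i = z := Function.update_self ..
  have hdist : 0 < dist z (y (A i)) := dist_pos.2 hzi
  have hopt_pos : 0 < OPT y x := OPT_pos hab fun p q _ =>
    ⟨i, hxi ▸ lt_min (hdist.trans_le (hnear p)) (hdist.trans_le (hnear q))⟩
  have hopt_le : OPT y x ≤ dist z (y (A i)) := by
    refine (OPT_le_pairCost (i := i) hab fun j hj => ?_).trans_eq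
      (hxi.symm ▸ pairCost_eq_of_mem hnear rfl (hA i))
    rcases hA j with h | h <;> simp [hx, hj, h]
  have hlt : f A k l * pairCost y k l (x i) < S * dist z (y (A i)) :=
    hS.mul_pairCost_lt hf ((consistent_comp A).update hnear) hopt_pos hopt_le k l i
  exact lt_asymm hcheap (hxi ▸ hlt)

lemma ElectsTwoVoted.comp {m n N : ℕ} {f : (Fin n → Fin m) → Fin m → Fin m → ℝ}
    (hf : ElectsTwoVoted f) {g : Fin n → Fin N} (hg : Function.Surjective g) :
    ElectsTwoVoted fun v : Fin N → Fin m => f (v ∘ g) :=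
  fun v a b hab hv k l hkl => hg.forall.2 <| hf (v ∘ g) a b hab (fun i => hv (g i)) k l hkl

end TwoVotes

section ThreeVotes

variable {α : Type*} [PseudoMetricSpace α] {m : ℕ} {y : Fin m → α}
  {h : (Fin 3 → Fin m) → Fin m → Fin m → ℝ} {v : Fin 3 → Fin m}

lemma exists_third : ∀ i j : Fin 3, i ≠ j → ∃ k, k ≠ i ∧ k ≠ j ∧ ∀ t, t = i ∨ t = j ∨ t = k := by
  decide

-- If voter `i` were at the common boundary of `v i` and `v j`, voting `v j` would elect `v j`, so
-- truthful voting must elect `v i` or `v j` as well.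
lemma elected_meets_votes (hh : IsRandMech h) (hsp : RandSP y h) (htwo : ElectsTwoVoted h)
    (hv : Function.Injective v) {i j : Fin 3} (hij : i ≠ j)
    (hvor : VoronoiNeighbors y (v i) (v j)) {k l : Fin m} (hkl : h v k l ≠ 0) :
    (k = v i ∨ k = v j) ∨ l = v i ∨ l = v j := by
  obtain ⟨z, hz, hfar⟩ := hvor
  obtain ⟨t, -, htj, hall⟩ := exists_third i j hij
  have hmin := dist_le_of_forall_lt hz hfar
  have hdev : ∀ s, Function.update v i (v j) s = v j ∨ Function.update v i (v j) s = v t := by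
    intro s
    rcases eq_or_ne s i with rfl | hsi
    · simp
    rcases (hall s).resolve_left hsi with rfl | rfl <;> simp [hsi]
  have helect : expCost y h (Function.update v i (v j)) z = dist z (y (v i)) := by
    rw [← sub_eq_zero, hh.expCost_sub]
    refine Finset.sum_eq_zero fun p _ => ?_
    by_cases hp : h (Function.update v i (v j)) p.1 p.2 = 0
    · rw [hp, zero_mul]
    have hj := htwo _ _ _ (hv.ne htj.symm) hdev p.1 p.2 hp i
    rw [Function.update_self] at hj
    rw [pairCost_eq_of_mem hmin hz.symm hj, sub_self, mul_zero]
  have htruth : expCost y h v z ≤ dist z (y (v i)) := by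
    simpa [helect] using hsp i z v (v i) (v j) hmin
  have hcost := hh.pairCost_eq_of_expCost_le hmin htruth hkl
  by_contra! hne
  exact (lt_min (hfar k hne.1.1 hne.1.2) (hfar l hne.2.1 hne.2.2)).ne' hcost

lemma fst_mem_range_of_apply_ne_zero (hvor : Pairwise (VoronoiNeighbors y))
    (hh : IsRandMech h) (hsp : RandSP y h) (htwo : ElectsTwoVoted h)
    (hv : Function.Injective v) {k l : Fin m} (hkl : h v k l ≠ 0) : k ∈ Set.range v := by
  by_contra hk
  have hl {i j : Fin 3} (hij : i ≠ j) : l = v i ∨ l = v j :=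
    (elected_meets_votes hh hsp htwo hv hij (hvor (hv.ne hij)) hkl).resolve_left <| by
      rintro (rfl | rfl) <;> exact hk ⟨_, rfl⟩
  have h01 := hl (show (0 : Fin 3) ≠ 1 by decide)
  have h02 := hl (show (0 : Fin 3) ≠ 2 by decide)
  have h12 := hl (show (1 : Fin 3) ≠ 2 by decide)
  have := hv.ne (show (0 : Fin 3) ≠ 1 by decide)
  have := hv.ne (show (0 : Fin 3) ≠ 2 by decide)
  have := hv.ne (show (1 : Fin 3) ≠ 2 by decide)
  grind

lemma exists_votes_of_apply_ne_zero (hvor : Pairwise (VoronoiNeighbors y))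
    (hh : IsRandMech h) (hsp : RandSP y h) (htwo : ElectsTwoVoted h)
    (hv : Function.Injective v) {k l : Fin m} (hkl : h v k l ≠ 0) :
    ∃ i j, i ≠ j ∧ v i = k ∧ v j = l := by
  obtain ⟨i, rfl⟩ := fst_mem_range_of_apply_ne_zero hvor hh hsp htwo hv hkl
  obtain ⟨j, rfl⟩ := fst_mem_range_of_apply_ne_zero hvor hh hsp htwo hv
    (((hh v).2.1 l (v i)).trans_ne hkl)
  exact ⟨i, j, fun hij => hh.ne_of_apply_ne_zero hkl (congrArg v hij), rfl, rfl⟩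

lemma exists_one_third_le_apply (hvor : Pairwise (VoronoiNeighbors y))
    (hh : IsRandMech h) (hsp : RandSP y h) (htwo : ElectsTwoVoted h)
    (hv : Function.Injective v) : ∃ i j, i ≠ j ∧ 1 / 3 ≤ h v (v i) (v j) := by
  let T : Finset (Fin m × Fin m) := (univ.filter fun q : Fin 3 × Fin 3 => q.1 < q.2).image
    fun q => (min (v q.1) (v q.2), max (v q.1) (v q.2))
  have hT (k l : Fin m) (hlt : k < l) (hkl : h v k l ≠ 0) : (k, l) ∈ T := by
    obtain ⟨i, j, hij, rfl, rfl⟩ := exists_votes_of_apply_ne_zero hvor hh hsp htwo hv hkl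
    rcases hij.lt_or_gt with hij | hij
    · exact Finset.mem_image.2 ⟨(i, j), by simpa using hij, by simp [hlt.le]⟩
    · exact Finset.mem_image.2 ⟨(j, i), by simpa using hij, by simp [hlt.le]⟩
  have hcard : #T ≤ 3 := Finset.card_image_le.trans (by decide)
  obtain ⟨k, l, hkl, hle⟩ := hh.exists_one_div_le_apply hT hcard
  obtain ⟨i, j, hij, rfl, rfl⟩ := exists_votes_of_apply_ne_zero hvor hh hsp htwo hv hkl
  exact ⟨i, j, hij, by simpa using hle⟩

lemma expCost_eq_add_of_injective (hvor : Pairwise (VoronoiNeighbors y))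
    (hh : IsRandMech h) (hsp : RandSP y h) (htwo : ElectsTwoVoted h)
    (hv : Function.Injective v) {i j k : Fin 3} (hij : i ≠ j) (hik : i ≠ k) (hjk : j ≠ k) {z : α}
    (hz : ∀ c, dist z (y (v i)) ≤ dist z (y c)) :
    expCost y h v z = dist z (y (v i)) +
      h v (v j) (v k) * (pairCost y (v j) (v k) z - dist z (y (v i))) := by
  refine hh.expCost_eq_add (hv.ne hjk) fun p q hpq hne => pairCost_eq_of_mem hz rfl ?_
  obtain ⟨s, t, hst, rfl, rfl⟩ := exists_votes_of_apply_ne_zero hvor hh hsp htwo hv hpq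
  by_contra! hi
  have hsi : s ≠ i := ne_of_apply_ne v hi.1.symm
  have hti : t ≠ i := ne_of_apply_ne v hi.2.symm
  have hjk' : s = j ∧ t = k ∨ s = k ∧ t = j := by omega
  rcases hjk' with ⟨rfl, rfl⟩ | ⟨rfl, rfl⟩
  · exact hne rfl
  · exact hne Sym2.eq_swap

lemma injective_update {ι β : Type*} [DecidableEq ι] {w : ι → β} (hw : Function.Injective w)
    (i : ι) {d : β} (hd : d ∉ Set.range w) : Function.Injective (Function.update w i d) := by
  intro s t hst
  have hwd (s : ι) : w s ≠ d := fun h => hd ⟨s, h⟩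
  by_cases hs : s = i <;> by_cases ht : t = i
  · exact hs.trans ht.symm
  · exact absurd (by simpa [hs, ht] using hst.symm) (hwd t)
  · exact absurd (by simpa [hs, ht] using hst) (hwd s)
  · exact hw (by simpa [hs, ht] using hst)

lemma apply_update_eq_apply (hvor : Pairwise (VoronoiNeighbors y))
    (hh : IsRandMech h) (hsp : RandSP y h) (htwo : ElectsTwoVoted h)
    (hv : Function.Injective v) {i j k : Fin 3} (hij : i ≠ j) (hik : i ≠ k) (hjk : j ≠ k)
    {d : Fin m} (hd : d ∉ Set.range v) :
    h (Function.update v i d) (v j) (v k) = h v (v j) (v k) := by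
  have hdv (t : Fin 3) : v t ≠ d := fun ht => hd ⟨t, ht⟩
  obtain ⟨z, hz, hfar⟩ := hvor (hdv i)
  have hmin := dist_le_of_forall_lt hz hfar
  have hpos : 0 < pairCost y (v j) (v k) z - dist z (y (v i)) :=
    sub_pos.2 (lt_min (hfar _ (hv.ne hij.symm) (hdv j)) (hfar _ (hv.ne hik.symm) (hdv k)))
  have hcost := expCost_eq_add_of_injective hvor hh hsp htwo hv hij hik hjk hmin
  have hcost' := expCost_eq_add_of_injective hvor hh hsp htwo (injective_update hv i hd) hij hik hjk
    (z := z) (by simpa [← hz] using hmin)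
  have hindiff := hsp.expCost_update_eq hz hmin v i
  rw [Function.update_eq_self] at hindiff
  simp only [Function.update_self, Function.update_of_ne hij.symm, Function.update_of_ne hik.symm,
    ← hz] at hcost'
  rw [hcost, hcost'] at hindiff
  exact (mul_right_cancel₀ hpos.ne' (add_left_cancel hindiff)).symm

end ThreeVotes

lemma exists_apply_ne_ne {β : Type*} {u : Fin 3 → β} (hu : Function.Injective u) (k l : β) :
    ∃ t, u t ≠ k ∧ u t ≠ l := by
  classical
  have hcard : #({k, l} : Finset β) < #(univ.image u) := by
    rw [Finset.card_image_of_injective _ hu]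
    exact Finset.card_le_two.trans_lt (by simp)
  obtain ⟨_, hmem, hnot⟩ := Finset.exists_mem_notMem_of_card_lt_card hcard
  obtain ⟨t, -, rfl⟩ := Finset.mem_image.1 hmem
  exact ⟨t, by simpa using hnot⟩

lemma OPT_comp_pos {α : Type*} [MetricSpace α] {m n : ℕ} {y : Fin m → α}
    (hy : Function.Injective y) {u : Fin 3 → Fin m} (hu : Function.Injective u)
    {g : Fin n → Fin 3} (hg : Function.Surjective g) : 0 < OPT y (y ∘ u ∘ g) := by
  refine OPT_pos (hu.ne zero_ne_one) fun a b _ => ?_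
  obtain ⟨t, hta, htb⟩ := exists_apply_ne_ne hu a b
  obtain ⟨t, rfl⟩ := hg t
  exact ⟨t, pairCost_pos (hy.ne hta) (hy.ne htb)⟩

lemma exists_surjective_fin_three {n : ℕ} (hn : 3 ≤ n) :
    ∃ g : Fin n → Fin 3, Function.Surjective g ∧ Set.InjOn g (g ⁻¹' {2}ᶜ) := by
  refine ⟨fun t => ⟨min t 2, by omega⟩, fun k => ⟨Fin.castLE hn k, ?_⟩, fun s hs t ht hst => ?_⟩
  · ext
    simp only [Fin.val_castLE]
    omega
  · simp only [Set.mem_preimage, Set.mem_compl_iff, Set.mem_singleton_iff, Fin.ext_iff,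
      Fin.val_two] at hs ht hst
    omega

theorem DistortionLT.div_div_three_lt {α : Type*} [MetricSpace α] [PerfectSpace α] {m n : ℕ}
    {y : Fin m → α} (hy : Function.Injective y) (hvor : Pairwise (VoronoiNeighbors y))
    {f : (Fin n → Fin m) → Fin m → Fin m → ℝ} (hf : IsRandMech f) (hsp : RandSP y f)
    (hn : 3 ≤ n) {v : Fin 3 → Fin m} (hv : Function.Injective v) {d : Fin m}
    (hd : d ∉ Set.range v) {s D S : ℝ} (hs : ∀ i j, i ≠ j → dist (y (v i)) (y (v j)) ≤ s)
    (hD : ∀ i, D ≤ dist (y d) (y (v i))) (hS : DistortionLT y f S) : D / s / 3 < S := by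
  obtain ⟨g, hg, hginj⟩ := exists_surjective_fin_three hn
  have hh := hf.comp g
  have htwo := (hS.electsTwoVoted hy hf).comp hg
  obtain ⟨j, k, hjk, hle⟩ := exists_one_third_le_apply hvor hh (hsp.comp g) htwo hv
  wlog hk : k ≠ 2 generalizing j k
  · exact this k j hjk.symm (hle.trans_eq ((hh v).2.1 _ _)) (not_not.1 hk ▸ hjk)
  obtain ⟨i, hij, hik, hall⟩ := exists_third j k hjk
  set u := Function.update v i d
  have hkeep : f (u ∘ g) (v j) (v k) = f (v ∘ g) (v j) (v k) :=
    apply_update_eq_apply hvor hh (hsp.comp g) htwo hv hij hik hjk hd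
  have hui : u i = d := Function.update_self ..
  have huj : u j = v j := Function.update_of_ne hij.symm ..
  have huk : u k = v k := Function.update_of_ne hik.symm ..
  obtain ⟨p, hp⟩ := hg i
  obtain ⟨q, hq⟩ := hg k
  have hdj : d ≠ v j := fun h => hd ⟨j, h.symm⟩
  have hopt_pos : 0 < OPT y (y ∘ u ∘ g) := OPT_comp_pos hy (injective_update hv i hd) hg
  have hothers : ∀ t ≠ q, u (g t) = d ∨ u (g t) = v j := fun t ht => by
    have htk : g t ≠ k := fun h => ht (hginj (by simpa [h]) (by simpa [hq]) (h.trans hq.symm))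
    rcases hall (g t) with h | h | h
    · exact Or.inr (h ▸ huj)
    · exact absurd h htk
    · exact Or.inl (h ▸ hui)
  have hopt_le : OPT y (y ∘ u ∘ g) ≤ s :=
    (OPT_comp_le_dist hdj hothers).trans <| by simpa [hq, huk] using hs k j hjk.symm
  have hcost : D ≤ pairCost y (v j) (v k) (y (u (g p))) := by
    rw [hp, hui]
    exact le_min (hD j) (hD k)
  have hlt : 1 / 3 * D < S * s :=
    calc 1 / 3 * D
      _ ≤ 1 / 3 * pairCost y (v j) (v k) (y (u (g p))) := by gcongr
      _ ≤ f (u ∘ g) (v j) (v k) * pairCost y (v j) (v k) (y (u (g p))) :=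
        mul_le_mul_of_nonneg_right (hle.trans_eq hkeep.symm) (pairCost_nonneg _ _ _)
      _ < S * s := hS.mul_pairCost_lt hf (consistent_comp _) hopt_pos hopt_le _ _ p
  rw [div_div, div_lt_iff₀ (mul_pos (hopt_pos.trans_le hopt_le) zero_lt_three)]
  linarith

lemma exists_forall_inner_eq {E ι : Type*} [NormedAddCommGroup E] [InnerProductSpace ℝ E]
    [Finite ι] {w : ι → E} (hw : LinearIndependent ℝ w) (t : ι → ℝ) :
    ∃ z, ∀ i, inner ℝ (w i) z = t i := by
  have := FiniteDimensional.span_of_finite ℝ (Set.finite_range w)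
  let b := Module.Basis.span hw
  let φ := LinearMap.toContinuousLinearMap (b.constr ℝ t)
  refine ⟨((InnerProductSpace.toDual ℝ _).symm φ : Submodule.span ℝ (Set.range w)), fun i => ?_⟩
  calc inner ℝ (w i) (((InnerProductSpace.toDual ℝ _).symm φ : Submodule.span ℝ (Set.range w)) : E)
      = inner ℝ (b i) ((InnerProductSpace.toDual ℝ _).symm φ) := by
        rw [Submodule.coe_inner, Module.Basis.span_apply]
    _ = φ (b i) := by rw [real_inner_comm, InnerProductSpace.toDual_symm_apply]
    _ = t i := b.constr_basis ℝ t i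

lemma exists_forall_dist_sq_eq {E ι : Type*} [NormedAddCommGroup E] [InnerProductSpace ℝ E]
    [Finite ι] {p : ι → E} (hp : AffineIndependent ℝ p) {i₀ : ι} {t : ι → ℝ} (ht : t i₀ = 0) :
    ∃ z, ∀ i, dist z (p i) ^ 2 = dist z (p i₀) ^ 2 + t i := by
  rw [affineIndependent_iff_linearIndependent_vsub ℝ p i₀] at hp
  obtain ⟨u, hu⟩ := exists_forall_inner_eq hp fun i => (‖p i - p i₀‖ ^ 2 - t i) / 2
  refine ⟨p i₀ + u, fun i => ?_⟩
  rcases eq_or_ne i i₀ with rfl | hi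
  · rw [ht, add_zero]
  have hui : inner ℝ (p i - p i₀) u = (‖p i - p i₀‖ ^ 2 - t i) / 2 := hu ⟨i, hi⟩
  have hsub : p i₀ + u - p i = u - (p i - p i₀) := by abel
  rw [dist_eq_norm, dist_eq_norm, add_sub_cancel_left, hsub, norm_sub_sq_real, real_inner_comm, hui]
  ring

lemma voronoiNeighbors_of_affineIndependent {E : Type*} [NormedAddCommGroup E]
    [InnerProductSpace ℝ E] {m : ℕ} {y : Fin m → E} (hy : AffineIndependent ℝ y) (a b : Fin m) :
    VoronoiNeighbors y a b := by
  obtain ⟨z, hz⟩ := exists_forall_dist_sq_eq hy (i₀ := a)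
    (t := fun c => if c = a ∨ c = b then 0 else 1) (by simp)
  refine ⟨z, ?_, fun c hca hcb => ?_⟩
  · exact ((sq_eq_sq₀ dist_nonneg dist_nonneg).1 (by simpa using hz b)).symm
  · exact (sq_lt_sq₀ dist_nonneg dist_nonneg).1 (by simp [hz c, hca, hcb])

section Candidates

variable {M : ℕ} {r : ℝ}

lemma multiCand_castSucc (i : Fin M) :
    multiCand (M + 1) r i.castSucc = EuclideanSpace.single i 1 := by
  simp [multiCand]

lemma multiCand_last : multiCand (M + 1) r (Fin.last M) = WithLp.toLp 2 fun _ => r := by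
  simp [multiCand]

lemma affineIndependent_multiCand (hr : M * r ≠ 1) :
    AffineIndependent ℝ (multiCand (M + 1) r) := by
  rw [affineIndependent_iff_of_fintype]
  intro w hsum hcomb
  rw [Finset.univ.weightedVSub_eq_linear_combination hsum] at hcomb
  rw [Fin.sum_univ_castSucc] at hsum hcomb
  have hcoord (j : Fin M) : w j.castSucc = -(w (Fin.last M) * r) := by
    have hj := congrArg (fun x : EuclideanSpace ℝ (Fin M) => x j) hcomb
    simpa [multiCand_castSucc, multiCand_last, Pi.single_apply, ← eq_neg_iff_add_eq_zero] using hj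
  have hlast : w (Fin.last M) = 0 := by
    simp only [hcoord, Finset.sum_const, Finset.card_univ, Fintype.card_fin, nsmul_eq_mul] at hsum
    have hmul : w (Fin.last M) * (1 - M * r) = 0 := by linear_combination hsum
    exact (mul_eq_zero.1 hmul).resolve_right (sub_ne_zero.2 hr.symm)
  exact Fin.lastCases hlast fun j => by rw [hcoord, hlast, zero_mul, neg_zero]

lemma dist_multiCand_castSucc {i j : Fin M} (hij : i ≠ j) :
    dist (multiCand (M + 1) r i.castSucc) (multiCand (M + 1) r j.castSucc) = √2 := by
  have hsq :
      ‖(EuclideanSpace.single i 1 - EuclideanSpace.single j 1 : EuclideanSpace ℝ (Fin M))‖ ^ 2 =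
        2 := by
    rw [norm_sub_sq_real, EuclideanSpace.inner_single_left]
    simp only [PiLp.norm_single, norm_one, one_pow, ne_eq, hij, not_false_eq_true,
      PiLp.single_eq_of_ne, mul_zero, sub_zero]
    norm_num
  rw [multiCand_castSucc, multiCand_castSucc, dist_eq_norm, ← hsq]
  exact (Real.sqrt_sq (norm_nonneg _)).symm

lemma dist_multiCand_last_castSucc (i : Fin M) :
    dist (multiCand (M + 1) r (Fin.last M)) (multiCand (M + 1) r i.castSucc) =
      √((r - 1) ^ 2 + (M - 1) * r ^ 2) := by
  have hsq :
      ‖(WithLp.toLp 2 (fun _ => r) - EuclideanSpace.single i 1 : EuclideanSpace ℝ (Fin M))‖ ^ 2 =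
        (r - 1) ^ 2 + (M - 1) * r ^ 2 := by
    rw [norm_sub_sq_real, EuclideanSpace.norm_sq_eq, EuclideanSpace.inner_single_right]
    simp only [Real.norm_eq_abs, sq_abs, Finset.sum_const, Finset.card_univ, Fintype.card_fin,
      nsmul_eq_mul, Real.ringHom_apply, one_mul, PiLp.norm_single, norm_one, one_pow]
    ring
  rw [multiCand_castSucc, multiCand_last, dist_eq_norm, ← hsq]
  exact (Real.sqrt_sq (norm_nonneg _)).symm

end Candidates

theorem stmt8_general (m : ℕ) (hm : 3 < m) (r : ℝ) (hr : ((m : ℝ) - 1) * r ≠ 1) (n : ℕ)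
    (hn : 3 ≤ n) (f : (Fin n → Fin m) → Fin m → Fin m → ℝ)
    (hmech : IsRandMech f) (hsp : RandSP (multiCand m r) f) :
    ∃ (a : Fin n → Fin m) (x : Fin n → EuclideanSpace ℝ (Fin (m - 1))),
      Consistent (multiCand m r) a x ∧
      (√((r - 1) ^ 2 + ((m : ℝ) - 2) * r ^ 2) / √2) / 3 ≤
        expSC (multiCand m r) f a x / OPT (multiCand m r) x := by
  obtain ⟨M, rfl⟩ : ∃ M, m = M + 1 := ⟨m - 1, by omega⟩
  have hM : 3 ≤ M := by omega
  have : Nonempty (Fin (M + 1 - 1)) := ⟨⟨0, by omega⟩⟩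
  have hind : AffineIndependent ℝ (multiCand (M + 1) r) :=
    affineIndependent_multiCand (by simpa using hr)
  by_contra! hlt
  have hS : DistortionLT (multiCand (M + 1) r) f _ := fun a x hax hpos =>
    (div_lt_iff₀ hpos).1 (hlt a x hax)
  refine (hS.div_div_three_lt hind.injective
    (fun a b _ => voronoiNeighbors_of_affineIndependent hind a b) hmech hsp hn
    (v := fun t => (Fin.castLE hM t).castSucc) (d := Fin.last M)
    (fun _ _ hst => by simpa using hst) ?_ (fun i j hij => ?_) fun i => ?_).ne rfl
  · rintro ⟨i, hi⟩
    exact Fin.castSucc_ne_last _ hi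
  · exact (dist_multiCand_castSucc (by simpa using hij)).le
  · rw [dist_multiCand_last_castSucc]
    refine (congrArg Real.sqrt ?_).le
    push_cast
    ring

/-- On the instance `multiCand m r` with `m > 3` and `r > 2` (where
`d_min = √2`, `d_max = √((r-1)² + (m-2)r²)` and `σ = d_max / d_min`), every
strategy-proof randomized two-winner scv mechanism with `n ≥ 3` voters has
distortion at least `σ / 6`. -/
theorem stmt8 (m : ℕ) (hm : 3 < m) (r : ℝ) (hr : 2 < r) (n : ℕ) (hn : 3 ≤ n)
    (f : (Fin n → Fin m) → Fin m → Fin m → ℝ)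
    (hmech : IsRandMech f) (hsp : RandSP (multiCand m r) f) :
    ∃ (a : Fin n → Fin m) (x : Fin n → EuclideanSpace ℝ (Fin (m - 1))),
      Consistent (multiCand m r) a x ∧
      (Real.sqrt ((r - 1) ^ 2 + ((m : ℝ) - 2) * r ^ 2) / Real.sqrt 2) / 6 ≤
        expSC (multiCand m r) f a x / OPT (multiCand m r) x := by
  have hm' : (3 : ℝ) < m := mod_cast hm
  obtain ⟨a, x, hax, hle⟩ := stmt8_general m hm r (by nlinarith) n hn f hmech hsp
  exact ⟨a, x, hax, le_trans (by gcongr; norm_num) hle⟩
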